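/- Let 0 < k < d with greedy X-decomposition (k_1, …, k_n), set k̄ := Σ_{i=1}^n k_i·q̄_i and B := Σ_{1 ≤ j < i ≤ n} (q̄_{X_j})_{i−j}·k_i·k_j. Regard 𝕃(k) as a subset of ℝ². Then twice the Lebesgue area of the bounded region (ℝ≥0²) \ convexHull(𝕃(k)) equals k·k̄ − d·B. (Equivalently, the Newton number of the lattice 𝕃(k), defined as μ := 1 + (2V − k − k̄)/d where V is that area, equals ((d−1) + (k−1)(k̄−1))/d − B, which is the formula μ_X(k) = ((d−1)+(k−1)(k̄−1))/d − [0,k]Q[k,0]^t.) -/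

import Mathlib

/-!
Let `u_i` be the dual sequence `u_0 = 0`, `u_1 = 1`, `u_{i+1} = c_i u_i - u_{i-1}`. It is strictly
increasing, satisfies `q u_i ≡ q_i (mod d)` and `q_i u_{i+1} - q_{i+1} u_i = d`; hence `q̄_i = u_i`
(`eq_hjDual`), and applying this to the tail of the data starting at `j` gives
`q_j q̄_i - q_i q̄_j = d (q̄_{X_j})_{i-j}`.

Let `r_i` be the greedy remainders of `k` and `y_i = Σ_{j ≤ i} k_j q̄_j`. The points
`V_i = (r_i, y_i)` lie in `𝕃(k)`, run from `(k, 0)` to `(0, k̄)`, and the edge `V_{i-1} V_i` has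
direction `(-q_i, q̄_i)`. The chain they form is the compact boundary of the convex hull of `𝕃(k)`:
a point of `𝕃(k)` strictly below the `i`-th edge line would be `V_i + a w_i + b w_{i+1}` with
`w_i = (q_i, -q̄_i)` and `b ≥ 1`. Since `r_i < q_i` and `y_i < q̄_{i+1}`, lying in the quadrant
forces `a = -b`, which needs both `r_i ≥ q_i - q_{i+1}` and `y_i ≥ q̄_{i+1} - q̄_i`
(`hj_support`). The bound on `y_i` and the incompatibility of the last two inequalities are proved
together by induction on `i` (`hj_dual_bounds`).

The complement of the hull in the quadrant is therefore, up to a null set, the union of the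
trapezoids below the edges (`volume_below_chain`), and the sum of their areas is rewritten with the
determinant identity above (`hj_area_identity`).
-/

/-! ### Greedy remainders and digits -/

/-- The remainders of the greedy change-making algorithm for the coin system
`Q 0, Q 1, …`: `r_0 = k % Q 0` and `r_{i+1} = r_i % Q (i+1)`. -/
def hjRem (Q : ℕ → ℤ) (k : ℤ) : ℕ → ℤ
  | 0 => k % Q 0
  | i + 1 => hjRem Q k i % Q (i + 1)

/-- The greedy digits for the coin system `Q 0, Q 1, …`:
`g_0 = ⌊k / Q 0⌋` and `g_{i+1} = ⌊r_i / Q (i+1)⌋`.  For `0 ≤ k < d = Q 0`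
the digits at indices `1, …, n` form the greedy `X`-decomposition of `k`. -/
def hjGreedy (Q : ℕ → ℤ) (k : ℤ) : ℕ → ℤ
  | 0 => k / Q 0
  | i + 1 => hjRem Q k i / Q (i + 1)

/-! ### The dual sequence -/

/-- The dual Hirzebruch–Jung sequence `u_0 = 0`, `u_1 = 1`, `u_{i+1} = c_i u_i - u_{i-1}`. -/
def hjDual (C : ℕ → ℤ) : ℕ → ℤ
  | 0 => 0
  | 1 => 1
  | m + 2 => C (m + 1) * hjDual C (m + 1) - hjDual C m

theorem hjDual_mono (n : ℕ) (C : ℕ → ℤ) (hC2 : ∀ i, 1 ≤ i → i ≤ n → 2 ≤ C i) (i : ℕ) (hi : i ≤ n) :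
    0 ≤ hjDual C i ∧ hjDual C i < hjDual C (i + 1) := by
  induction i with
  | zero => simp [hjDual]
  | succ m ih =>
    obtain ⟨h1, h2⟩ := ih (by omega)
    have h3 := hC2 (m + 1) (by omega) hi
    refine ⟨by omega, ?_⟩
    rw [hjDual]
    nlinarith

theorem hjDual_det (n : ℕ) (Q C : ℕ → ℤ)
    (hrec : ∀ i, i + 1 ≤ n → Q i = C (i + 1) * Q (i + 1) - Q (i + 2)) (i : ℕ) (hi : i ≤ n) :
    Q i * hjDual C (i + 1) - Q (i + 1) * hjDual C i = Q 0 := by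
  induction i with
  | zero => simp [hjDual]
  | succ m ih =>
    rw [← ih (by omega), hrec m hi]
    simp only [hjDual]
    ring

theorem hjDual_cong (n : ℕ) (Q C : ℕ → ℤ)
    (hrec : ∀ i, i + 1 ≤ n → Q i = C (i + 1) * Q (i + 1) - Q (i + 2)) (i : ℕ) (hi : i ≤ n) :
    Q 0 ∣ Q 1 * hjDual C i - Q i ∧ Q 0 ∣ Q 1 * hjDual C (i + 1) - Q (i + 1) := by
  induction i with
  | zero => simp [hjDual]
  | succ m ih =>
    obtain ⟨⟨a, ha⟩, ⟨b, hb⟩⟩ := ih (by omega)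
    refine ⟨⟨b, hb⟩, ⟨C (m + 1) * b - a, ?_⟩⟩
    have := hrec m hi
    simp only [hjDual]
    linear_combination C (m + 1) * hb - ha - this

theorem hj_coprime (n : ℕ) (Q C : ℕ → ℤ) (hQn : Q n = 1)
    (hrec : ∀ i, i + 1 ≤ n → Q i = C (i + 1) * Q (i + 1) - Q (i + 2)) :
    IsCoprime (Q 0) (Q 1) := by
  have key : ∀ m, m ≤ n → IsCoprime (Q (n - m)) (Q (n - m + 1)) := by
    intro m hm
    induction m with
    | zero => simpa [hQn] using isCoprime_one_left
    | succ m ih =>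
      obtain ⟨a, b, hab⟩ := ih (by omega)
      obtain ⟨t, ht⟩ : ∃ t, t = n - (m + 1) := ⟨_, rfl⟩
      have e : n - m = t + 1 := by omega
      rw [e] at hab
      rw [← ht]
      have := hrec t (by omega)
      exact ⟨-b, a + C (t + 1) * b, by rw [this]; linear_combination hab⟩
  simpa using key n le_rfl

/-- The least positive solution `t` of `q_1 t ≡ q_m (mod q_0)` is the dual sequence at `m`. -/
theorem eq_hjDual (n : ℕ) (Q C : ℕ → ℤ) (hQn : Q n = 1) (hQtop : Q (n + 1) = 0)
    (hrec : ∀ i, i + 1 ≤ n → Q i = C (i + 1) * Q (i + 1) - Q (i + 2))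
    (hC2 : ∀ i, 1 ≤ i → i ≤ n → 2 ≤ C i)
    (m : ℕ) (hm1 : 1 ≤ m) (hmn : m ≤ n) (t : ℤ) (ht : 0 < t) (htc : Q 0 ∣ Q 1 * t - Q m)
    (hmin : ∀ s : ℤ, 0 < s → Q 0 ∣ Q 1 * s - Q m → t ≤ s) : t = hjDual C m := by
  have hpos : 0 < hjDual C m := by
    obtain ⟨j, rfl⟩ : ∃ j, m = j + 1 := ⟨m - 1, by omega⟩
    have := hjDual_mono n C hC2 j (by omega)
    omega
  have htop : hjDual C (n + 1) = Q 0 := by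
    simpa [hQn, hQtop] using hjDual_det n Q C hrec n le_rfl
  have hlt : ∀ j, m + j ≤ n → hjDual C m < hjDual C (m + j + 1) := by
    intro j
    induction j with
    | zero => intro h; exact (hjDual_mono n C hC2 m h).2
    | succ j ih =>
      intro h
      exact (ih (by omega)).trans (hjDual_mono n C hC2 (m + (j + 1)) h).2
  have hlt' : hjDual C m < Q 0 := by
    have := hlt (n - m) (by omega)
    rwa [show m + (n - m) + 1 = n + 1 by omega, htop] at this
  have hc := (hjDual_cong n Q C hrec m hmn).1
  have hle := hmin _ hpos hc
  have hd : Q 0 ∣ Q 1 * (hjDual C m - t) := by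
    have := dvd_sub hc htc
    ring_nf at this ⊢
    exact this
  have hd2 : Q 0 ∣ hjDual C m - t := (hj_coprime n Q C hQn hrec).dvd_of_dvd_mul_left hd
  have := Int.eq_zero_of_dvd_of_nonneg_of_lt (by omega) (by omega) hd2
  omega

/-! ### Greedy digits and supporting lines -/

/-- The two bounds that make the greedy chain convex, for the partial sums `Y_i` of `Σ k_j u_j`.
The second one expresses that the digit pattern `c - 1, c - 2, …, c - 2, c - 1` never occurs. -/
theorem hj_dual_bounds (n : ℕ) (Q C U g R Y : ℕ → ℤ)
    (hQpos : ∀ i, i ≤ n → 0 < Q i) (hQ' : ∀ i, i ≤ n + 1 → 0 ≤ Q i)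
    (hrec : ∀ i, i + 1 ≤ n → Q i = C (i + 1) * Q (i + 1) - Q (i + 2))
    (hU0 : U 0 = 0) (hU1 : U 1 = 1)
    (hUrec : ∀ i, i + 1 ≤ n → U (i + 2) = C (i + 1) * U (i + 1) - U i)
    (hUmono : ∀ i, i ≤ n → 0 ≤ U i ∧ U i < U (i + 1))
    (hR : ∀ i, i + 1 ≤ n → R i = g (i + 1) * Q (i + 1) + R (i + 1))
    (hRb : ∀ i, i ≤ n → 0 ≤ R i ∧ R i < Q i)
    (hY0 : Y 0 = 0) (hY : ∀ i, i + 1 ≤ n → Y (i + 1) = Y i + g (i + 1) * U (i + 1))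
    (i : ℕ) (hi : i ≤ n) :
    Y i < U (i + 1) ∧ (Q i - Q (i + 1) ≤ R i → Y i < U (i + 1) - U i) := by
  induction i with
  | zero => simp [hY0, hU0, hU1]
  | succ m ih =>
    obtain ⟨hP, hN⟩ := ih (by omega)
    have q0 := hrec m hi
    have u0 := hUrec m hi
    have r0 := hR m hi
    have y0 := hY m hi
    have b0 := hRb m (by omega)
    have b1 := hRb (m + 1) hi
    have qp := hQpos (m + 1) hi
    have qp2 := hQ' (m + 2) (by omega)
    have m0 := hUmono m (by omega)
    have m1 := hUmono (m + 1) hi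
    have hg : g (m + 1) ≤ C (m + 1) - 1 := by
      by_contra hcon
      push Not at hcon
      nlinarith
    refine ⟨?_, ?_⟩
    · show Y (m + 1) < U (m + 2)
      rcases eq_or_lt_of_le hg with h | h
      · have := hN (by rw [r0, q0, h]; linarith)
        rw [y0, u0, h]; linarith
      · have : g (m + 1) * U (m + 1) ≤ (C (m + 1) - 2) * U (m + 1) :=
          mul_le_mul_of_nonneg_right (by omega) m1.1
        linarith
    · intro hr
      change Q (m + 1) - Q (m + 2) ≤ _ at hr
      show Y (m + 1) < U (m + 2) - _
      rcases eq_or_lt_of_le hg with h | h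
      · exfalso
        rw [h] at r0
        linarith
      · rcases eq_or_lt_of_le (show g (m + 1) ≤ C (m + 1) - 2 by omega) with h | h
        · have := hN (by rw [r0, q0, h]; linarith)
          rw [y0, u0, h]; linarith
        · have : g (m + 1) * U (m + 1) ≤ (C (m + 1) - 3) * U (m + 1) :=
            mul_le_mul_of_nonneg_right (by omega) m1.1
          linarith

/-- The line through the chain vertex `(R, Y)` in direction `(-q_i, u_i)` supports the lattice
`𝕃(k)`. Here `(q, q')` and `(u, u')` stand for `(q_i, q_{i+1})` and `(u_i, u_{i+1})`. -/
theorem hj_support (d e q q' u u' R Y x y : ℤ) (hd : 0 < d)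
    (hdet : q * u' - q' * u = d) (hq : 0 ≤ q') (hqq : q' < q) (hu : 0 ≤ u) (huu : u < u')
    (hc : d ∣ e * u - q) (hc' : d ∣ e * u' - q')
    (hR : R < q) (hY : Y < u') (hN : q - q' ≤ R → Y < u' - u)
    (hx : 0 ≤ x) (hy : 0 ≤ y) (hxy : d ∣ (x - R) + e * (y - Y)) :
    u * R + q * Y ≤ u * x + q * y := by
  obtain ⟨m, hm⟩ := hxy
  obtain ⟨s', hs'⟩ := hc'
  obtain ⟨s, hs⟩ := hc
  -- coordinates of `(x - R, y - Y)` in the basis `(q, -u)`, `(q', -u')`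
  obtain ⟨a, ha⟩ : ∃ a, (x - R) * u' + (y - Y) * q' = d * a :=
    ⟨u' * m - (y - Y) * s', by linear_combination u' * hm - (y - Y) * hs'⟩
  obtain ⟨b, hb⟩ : ∃ b, (x - R) * u + (y - Y) * q = -(d * b) :=
    ⟨-(u * m - (y - Y) * s), by linear_combination u * hm - (y - Y) * hs⟩
  have hX : x = R + a * q + b * q' := by
    have : d * x = d * (R + a * q + b * q') := by
      linear_combination (-(x - R)) * hdet + q * ha - q' * hb
    exact mul_left_cancel₀ hd.ne' this
  have hYY : y = Y - a * u - b * u' := by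
    have : d * y = d * (Y - a * u - b * u') := by
      linear_combination (-(y - Y)) * hdet - u * ha + u' * hb
    exact mul_left_cancel₀ hd.ne' this
  by_contra hcon
  have hb1 : 1 ≤ b := by
    by_contra hb0
    have : d * b ≤ 0 := mul_nonpos_of_nonneg_of_nonpos hd.le (by omega)
    linarith
  have h1 : -a ≤ b := by
    by_contra h
    nlinarith [mul_nonneg (show (0 : ℤ) ≤ -a - 1 - b by omega) (show 0 ≤ q by omega),
      mul_nonneg (show (0 : ℤ) ≤ b by omega) (show 0 ≤ q - q' by omega)]
  have h2 : b ≤ -a := by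
    by_contra h
    nlinarith [mul_nonneg (show (0 : ℤ) ≤ b - 1 + a by omega) hu,
      mul_nonneg (show (0 : ℤ) ≤ b - 1 by omega) (show 0 ≤ u' - u by omega)]
  obtain rfl : a = -b := by omega
  have h3 : q - q' ≤ R := by
    nlinarith [mul_nonneg (show (0 : ℤ) ≤ b - 1 by omega) (show 0 ≤ q - q' by omega)]
  have := hN h3
  nlinarith [mul_nonneg (show (0 : ℤ) ≤ b - 1 by omega) (show 0 ≤ u' - u by omega)]

/-- Twice the total area of the trapezoids below the first `m` edges of the chain; the term
`R m * Y m` vanishes for the whole chain. -/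
theorem hj_area_identity (n : ℕ) (d k : ℤ) (Q U g R Y : ℕ → ℤ) (X : ℕ → ℕ → ℤ)
    (hR0 : R 0 = k) (hR : ∀ i, i + 1 ≤ n → R i = g (i + 1) * Q (i + 1) + R (i + 1))
    (hY0 : Y 0 = 0) (hY : ∀ i, i + 1 ≤ n → Y (i + 1) = Y i + g (i + 1) * U (i + 1))
    (hX : ∀ i j, 1 ≤ j → j < i → i ≤ n → Q j * U i - Q i * U j = d * X j (i - j))
    (m : ℕ) (hm : m ≤ n) :
    Y m = ∑ i ∈ Finset.Icc 1 m, g i * U i ∧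
    k - R m = ∑ i ∈ Finset.Icc 1 m, g i * Q i ∧
    ∑ i ∈ Finset.range m, g (i + 1) * Q (i + 1) * (Y i + Y (i + 1)) =
      k * Y m - d * ∑ i ∈ Finset.Icc 1 m, ∑ j ∈ Finset.Icc 1 (i - 1), X j (i - j) * g i * g j
        - R m * Y m := by
  induction m with
  | zero => simp [hY0, hR0]
  | succ m ih =>
    obtain ⟨h1, h2, h3⟩ := ih (by omega)
    have y0 := hY m hm
    have r0 := hR m hm
    refine ⟨?_, ?_, ?_⟩
    · rw [Finset.sum_Icc_succ_top (by omega), y0, h1]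
    · rw [Finset.sum_Icc_succ_top (by omega), ← h2]; linarith
    · rw [Finset.sum_Icc_succ_top (by omega), Finset.sum_range_succ, h3]
      have hB : d * ∑ j ∈ Finset.Icc 1 (m + 1 - 1), X j (m + 1 - j) * g (m + 1) * g j
          = g (m + 1) * ((k - R m) * U (m + 1) - Q (m + 1) * Y m) := by
        rw [h2, h1, Nat.add_sub_cancel, Finset.mul_sum, Finset.sum_mul, Finset.mul_sum,
          ← Finset.sum_sub_distrib, Finset.mul_sum]
        refine Finset.sum_congr rfl fun j hj => ?_
        have hj := Finset.mem_Icc.1 hj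
        linear_combination (-g (m + 1) * g j) * hX (m + 1) j hj.1 (by omega) hm
      rw [mul_add d, hB, y0]
      linear_combination (-(Y m + g (m + 1) * U (m + 1))) * r0

/-! ### Area below a convex chain -/

open MeasureTheory in
/-- Area of a trapezoid standing on the `x`-axis. -/
theorem volume_trapezoid (a b α β : ℝ) (hab : a ≤ b) (ha : 0 ≤ α + β * a) (hb : 0 ≤ α + β * b) :
    volume {p : ℝ × ℝ | a < p.1 ∧ p.1 ≤ b ∧ 0 ≤ p.2 ∧ p.2 < α + β * p.1} =
      ENNReal.ofReal ((b - a) * ((α + β * a) + (α + β * b)) / 2) := by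
  have hms : MeasurableSet {p : ℝ × ℝ | a < p.1 ∧ p.1 ≤ b ∧ 0 ≤ p.2 ∧ p.2 < α + β * p.1} := by
    measurability
  rw [Measure.volume_eq_prod, Measure.prod_apply hms]
  have hsl : ∀ x : ℝ, volume (Prod.mk x ⁻¹'
      {p : ℝ × ℝ | a < p.1 ∧ p.1 ≤ b ∧ 0 ≤ p.2 ∧ p.2 < α + β * p.1}) =
      (Set.Ioc a b).indicator (fun x => ENNReal.ofReal (α + β * x)) x := by
    intro x
    by_cases hx : x ∈ Set.Ioc a b
    · rw [Set.indicator_of_mem hx]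
      have : Prod.mk x ⁻¹' {p : ℝ × ℝ | a < p.1 ∧ p.1 ≤ b ∧ 0 ≤ p.2 ∧ p.2 < α + β * p.1}
          = Set.Ico 0 (α + β * x) := by
        ext y
        simp [hx.1, hx.2]
      rw [this, Real.volume_Ico, sub_zero]
    · rw [Set.indicator_of_notMem hx]
      have : Prod.mk x ⁻¹' {p : ℝ × ℝ | a < p.1 ∧ p.1 ≤ b ∧ 0 ≤ p.2 ∧ p.2 < α + β * p.1}
          = ∅ := by
        ext y
        simp only [Set.mem_preimage, Set.mem_ofPred_eq, Set.mem_empty_iff_false, iff_false]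
        exact fun h => hx ⟨h.1, h.2.1⟩
      rw [this, measure_empty]
  simp_rw [hsl]
  rw [lintegral_indicator measurableSet_Ioc, ← ofReal_integral_eq_lintegral_ofReal]
  · congr 1
    rw [← intervalIntegral.integral_of_le hab, intervalIntegral.integral_add (by simp)
      (Continuous.intervalIntegrable (by fun_prop) _ _), intervalIntegral.integral_const_mul,
      integral_id, intervalIntegral.integral_const, smul_eq_mul]
    ring
  · exact (Continuous.integrableOn_Icc (by fun_prop)).mono_set Set.Ioc_subset_Icc_self
  · refine (ae_restrict_iff' measurableSet_Ioc).2 (Filter.Eventually.of_forall fun x hx => ?_)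
    -- an affine function that is nonnegative at both endpoints is nonnegative in between
    show 0 ≤ α + β * x
    rcases le_total 0 β with h | h
    · nlinarith [hx.1]
    · nlinarith [hx.2]

/-- The convex hull of a set of points stable under the translations `(d, 0)` and `(0, d)` is
stable under adding any vector of the closed positive quadrant. -/
theorem hull_add_nonneg (L : Set (ℝ × ℝ)) (d : ℝ) (hd : 0 < d)
    (h1 : ∀ p ∈ L, p + (d, 0) ∈ L) (h2 : ∀ p ∈ L, p + (0, d) ∈ L)
    (p : ℝ × ℝ) (hp : p ∈ convexHull ℝ L) (v : ℝ × ℝ) (hv1 : 0 ≤ v.1) (hv2 : 0 ≤ v.2) :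
    p + v ∈ convexHull ℝ L := by
  have step : ∀ w : ℝ × ℝ, (∀ p ∈ L, p + w ∈ L) → ∀ p ∈ convexHull ℝ L, ∀ t : ℝ, 0 ≤ t →
      p + t • w ∈ convexHull ℝ L := by
    intro w hw p hp t ht
    have tr : ∀ p ∈ convexHull ℝ L, p + w ∈ convexHull ℝ L := by
      have : convexHull ℝ L ⊆ (fun z => z + w) ⁻¹' convexHull ℝ L :=
        convexHull_min (fun z hz => subset_convexHull ℝ L (hw z hz))
          ((convex_convexHull ℝ L).translate_preimage_right w |> fun h => by
            simpa [add_comm] using h)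
      exact fun p hp => this hp
    have trm : ∀ m : ℕ, p + (m : ℝ) • w ∈ convexHull ℝ L := by
      intro m
      induction m with
      | zero => simpa using hp
      | succ m ih =>
        have := tr _ ih
        convert this using 1
        push_cast
        module
    obtain ⟨m, hm⟩ := exists_nat_gt t
    have hm0 : (0 : ℝ) < m := ht.trans_lt hm
    have := (convex_convexHull ℝ L).add_smul_mem hp (trm m) (t := t / m)
      ⟨by positivity, (div_le_one hm0).2 hm.le⟩
    rwa [smul_smul, div_mul_cancel₀ _ hm0.ne'] at this
  have := step _ h2 _ (step _ h1 p hp (v.1 / d) (by positivity)) (v.2 / d) (by positivity)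
  convert this using 1
  ext <;> simp [hd.ne']

open MeasureTheory in
/-- Let `H` be a convex set stable under adding vectors of the positive quadrant, and let
`(x_i, y_i) ∈ H`, `0 ≤ i ≤ n`, be a chain with `x_i` weakly decreasing from `(x_0, 0)` to `x_n = 0`.
If every edge line `u_i x + q_i y = u_i x_i + q_i y_i` supports `H`, then the part of the quadrant
outside `H` is, up to a null set, the union of the trapezoids below the edges. -/
theorem volume_below_chain (n : ℕ) (H : Set (ℝ × ℝ)) (hH : Convex ℝ H)
    (hadd : ∀ p ∈ H, ∀ v : ℝ × ℝ, 0 ≤ v.1 → 0 ≤ v.2 → p + v ∈ H)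
    (x y u q : ℕ → ℝ) (hV : ∀ i, i ≤ n → (x i, y i) ∈ H)
    (hxn : x n = 0) (hy0 : y 0 = 0) (hy : ∀ i, i ≤ n → 0 ≤ y i)
    (hx : ∀ i, i + 1 ≤ n → x (i + 1) ≤ x i) (hq : ∀ i, i + 1 ≤ n → 0 < q (i + 1))
    (hedge : ∀ i, i + 1 ≤ n →
      u (i + 1) * x i + q (i + 1) * y i = u (i + 1) * x (i + 1) + q (i + 1) * y (i + 1))
    (hsup : ∀ i, i + 1 ≤ n → ∀ p ∈ H,
      u (i + 1) * x (i + 1) + q (i + 1) * y (i + 1) ≤ u (i + 1) * p.1 + q (i + 1) * p.2) :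
    2 * (volume ({p : ℝ × ℝ | 0 ≤ p.1 ∧ 0 ≤ p.2} \ H)).toReal =
      ∑ i ∈ Finset.range n, (x i - x (i + 1)) * (y i + y (i + 1)) := by
  set S : Set (ℝ × ℝ) := {p : ℝ × ℝ | 0 ≤ p.1 ∧ 0 ≤ p.2} \ H with hS
  have hxlt : ∀ i, i ≤ n → 0 ≤ x i := by
    have : ∀ j, j ≤ n → 0 ≤ x (n - j) := by
      intro j
      induction j with
      | zero => simp [hxn]
      | succ j ih =>
        intro hj
        have h := hx (n - (j + 1)) (by omega)
        rw [show n - (j + 1) + 1 = n - j by omega] at h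
        exact (ih (by omega)).trans h
    intro i hi
    simpa [Nat.sub_sub_self hi] using this (n - i) (by omega)
  have hnn : ∀ i, i + 1 ≤ n → 0 ≤ (x i - x (i + 1)) * (y i + y (i + 1)) := fun i hi =>
    mul_nonneg (sub_nonneg.2 (hx i hi)) (add_nonneg (hy i (by omega)) (hy _ hi))
  have strip : ∀ i, i + 1 ≤ n → volume (S ∩ {p | x (i + 1) < p.1 ∧ p.1 ≤ x i}) =
      ENNReal.ofReal ((x i - x (i + 1)) * (y i + y (i + 1)) / 2) := by
    intro i hi
    have hq0 := hq i hi
    have he := hedge i hi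
    set α := y i + u (i + 1) / q (i + 1) * x i with hα
    set β := -(u (i + 1) / q (i + 1)) with hβ
    have e1 : α + β * x i = y i := by rw [hα, hβ]; ring
    have e2 : α + β * x (i + 1) = y (i + 1) := by
      rw [hα, hβ]; field_simp; linarith
    have hset : S ∩ {p | x (i + 1) < p.1 ∧ p.1 ≤ x i} =
        {p : ℝ × ℝ | x (i + 1) < p.1 ∧ p.1 ≤ x i ∧ 0 ≤ p.2 ∧ p.2 < α + β * p.1} := by
      ext ⟨a, b⟩
      simp only [hS, Set.mem_inter_iff, Set.mem_sdiff, Set.mem_ofPred_eq]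
      have hline : q (i + 1) * (α + β * a) =
          u (i + 1) * x (i + 1) + q (i + 1) * y (i + 1) - u (i + 1) * a := by
        rw [hα, hβ]; field_simp; linarith
      constructor
      · rintro ⟨⟨⟨ha, hb⟩, hnot⟩, h1, h2⟩
        refine ⟨h1, h2, hb, ?_⟩
        by_contra hcon
        push Not at hcon
        apply hnot
        have hlt : 0 < x i - x (i + 1) := by linarith
        -- the point of the edge below `(a, b)`
        have hm := hH.add_smul_sub_mem (hV (i + 1) hi) (hV i (by omega))
          (t := (a - x (i + 1)) / (x i - x (i + 1)))
          ⟨div_nonneg (by linarith) hlt.le, (div_le_one hlt).2 (by linarith)⟩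
        have := hadd _ hm (0, b - (α + β * a)) le_rfl (by simpa using hcon)
        convert this using 1
        ext
        · simp [div_mul_cancel₀ _ hlt.ne']
        · simp only [Prod.snd_add, Prod.smul_snd, Prod.snd_sub, smul_eq_mul]
          rw [← e1, ← e2]
          field_simp
          ring
      · rintro ⟨h1, h2, h3, h4⟩
        refine ⟨⟨⟨(hxlt _ hi).trans h1.le, h3⟩, fun hin => ?_⟩, h1, h2⟩
        have h5 := hsup i hi _ hin
        have h6 := mul_lt_mul_of_pos_left h4 hq0
        simp only at h5
        linarith
    rw [hset, volume_trapezoid _ _ _ _ (hx i hi) (by rw [e2]; exact hy _ hi)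
      (by rw [e1]; exact hy _ (by omega)), e1, e2, add_comm (y (i + 1))]
  have part : ∀ m, m ≤ n → volume (S ∩ {p | x m < p.1}) =
      ENNReal.ofReal (∑ i ∈ Finset.range m, (x i - x (i + 1)) * (y i + y (i + 1)) / 2) := by
    intro m
    induction m with
    | zero =>
      intro _
      have : S ∩ {p | x 0 < p.1} = ∅ := by
        ext ⟨a, b⟩
        simp only [hS, Set.mem_inter_iff, Set.mem_sdiff, Set.mem_ofPred_eq, Set.mem_empty_iff_false,
          iff_false]
        rintro ⟨⟨⟨ha, hb⟩, hnot⟩, h⟩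
        apply hnot
        have := hadd _ (hV 0 (by omega)) (a - x 0, b) (by simpa using h.le) hb
        simpa [hy0] using this
      rw [this]; simp
    | succ m ih =>
      intro hm
      have hms : MeasurableSet {p : ℝ × ℝ | x m < p.1} :=
        measurableSet_lt (by fun_prop) (by fun_prop)
      rw [← measure_inter_add_sdiff _ hms, Finset.sum_range_succ, ENNReal.ofReal_add
        (Finset.sum_nonneg fun i hi => by
          have := hnn i (by have := Finset.mem_range.1 hi; omega)
          positivity)
        (by have := hnn m hm; positivity), ← ih (by omega), ← strip m hm]
      congr 2
      · ext p
        simp only [Set.mem_inter_iff, Set.mem_ofPred_eq]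
        exact ⟨fun h => ⟨h.1.1, h.2⟩, fun h => ⟨⟨h.1, (hx m hm).trans_lt h.2⟩, h.2⟩⟩
      · ext p
        simp only [Set.mem_inter_iff, Set.mem_sdiff, Set.mem_ofPred_eq, not_lt, and_assoc]
  have null : volume (S \ {p | x n < p.1}) = 0 := by
    refine measure_mono_null (t := ({0} : Set ℝ) ×ˢ Set.univ) ?_ ?_
    · rintro ⟨a, b⟩ ⟨⟨⟨ha, -⟩, -⟩, h⟩
      simp only [Set.mem_ofPred_eq, hxn, not_lt] at h ha
      simp [le_antisymm h ha]
    · rw [Measure.volume_eq_prod, Measure.prod_prod]; simp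
  have hms : MeasurableSet {p : ℝ × ℝ | x n < p.1} :=
    measurableSet_lt (by fun_prop) (by fun_prop)
  rw [← measure_inter_add_sdiff S hms, null, add_zero, part n le_rfl, ENNReal.toReal_ofReal
    (Finset.sum_nonneg fun i hi => by
      have := hnn i (by have := Finset.mem_range.1 hi; omega)
      positivity), ← Finset.sum_div]
  ring

/-! ### The formula -/

/-- **Hirzebruch–Jung data** of `d/q` for coprime `d > q ≥ 1` and `q̄`-data of
the quotient singularities `X_i = X(q_i;1,q_{i+1})` (see hypotheses).

**Statement:** let `0 < k < d` have greedy `X`-decomposition `(k_1, …, k_n)`,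
set `k̄ := Σ k_i q̄_i` and `B := Σ_{1 ≤ j < i ≤ n} (q̄_{X_j})_{i−j} k_i k_j`.
Regarding the lattice `𝕃(k) = {(r,s) ∈ ℤ≥0² : r + q·s ≡ k (mod d)}` as a subset
of `ℝ²`, twice the Lebesgue area of the bounded region
`ℝ≥0² \ convexHull 𝕃(k)` equals `k·k̄ − d·B`.  (Equivalently, the Newton
number `μ_X(k) = 1 + (2V − k − k̄)/d` equals
`((d−1) + (k−1)(k̄−1))/d − [0,k]Q[k,0]ᵗ`.) -/
theorem newton_number_formula
    (n : ℕ) (d q : ℤ) (Q C Qbar : ℕ → ℤ) (QbarX : ℕ → ℕ → ℤ)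
    (hn : 1 ≤ n) (hq1 : 1 ≤ q) (hqd : q < d) (hcop : Int.gcd d q = 1)
    (hQ0 : Q 0 = d) (hQ1 : Q 1 = q) (hQn : Q n = 1) (hQtop : Q (n + 1) = 0)
    (hQdec : ∀ i, i ≤ n → Q (i + 1) < Q i)
    (hC : ∀ i, 1 ≤ i → i ≤ n → Q (i - 1) = C i * Q i - Q (i + 1))
    (hC2 : ∀ i, 1 ≤ i → i ≤ n → 2 ≤ C i)
    (hQbar0 : Qbar 0 = 0) (hQbarTop : Qbar (n + 1) = d)
    (hQbarPos : ∀ i, 1 ≤ i → i ≤ n → 0 < Qbar i)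
    (hQbarCong : ∀ i, 1 ≤ i → i ≤ n → d ∣ q * Qbar i - Q i)
    (hQbarMin : ∀ i, 1 ≤ i → i ≤ n → ∀ t : ℤ, 0 < t → d ∣ q * t - Q i → Qbar i ≤ t)
    (hX0 : ∀ i, i ≤ n → QbarX i 0 = 0)
    (hXpos : ∀ i m, i + 1 ≤ n → 1 ≤ m → m ≤ n - i → 0 < QbarX i m)
    (hXcong : ∀ i m, i + 1 ≤ n → 1 ≤ m → m ≤ n - i →
      Q i ∣ Q (i + 1) * QbarX i m - Q (i + m))
    (hXmin : ∀ i m, i + 1 ≤ n → 1 ≤ m → m ≤ n - i →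
      ∀ t : ℤ, 0 < t → Q i ∣ Q (i + 1) * t - Q (i + m) → QbarX i m ≤ t)
    (k : ℤ) (hk0 : 0 < k) (hkd : k < d) :
    2 * (MeasureTheory.volume
        ({p : ℝ × ℝ | 0 ≤ p.1 ∧ 0 ≤ p.2} \
          convexHull ℝ {p : ℝ × ℝ | ∃ r s : ℤ,
            0 ≤ r ∧ 0 ≤ s ∧ d ∣ r + q * s - k ∧
            p = ((r : ℝ), (s : ℝ))})).toReal
      = ((k * (∑ i ∈ Finset.Icc 1 n, hjGreedy Q k i * Qbar i)
          - d * ∑ i ∈ Finset.Icc 1 n, ∑ j ∈ Finset.Icc 1 (i - 1),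
              QbarX j (i - j) * hjGreedy Q k i * hjGreedy Q k j : ℤ) : ℝ) := by
  have hQpos' : ∀ j, j ≤ n → 0 < Q (n - j) := by
    intro j
    induction j with
    | zero => simp [hQn]
    | succ j ih =>
      intro hj
      have h := hQdec (n - (j + 1)) (by omega)
      rw [show n - (j + 1) + 1 = n - j by omega] at h
      exact (ih (by omega)).trans h
  have hQpos : ∀ i, i ≤ n → 0 < Q i := fun i hi => by
    simpa [Nat.sub_sub_self hi] using hQpos' (n - i) (by omega)
  have hQnn : ∀ i, i ≤ n + 1 → 0 ≤ Q i := fun i hi => by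
    rcases Nat.lt_or_ge n i with h | h
    · rw [show i = n + 1 by omega, hQtop]
    · exact (hQpos i h).le
  have hrec : ∀ i, i + 1 ≤ n → Q i = C (i + 1) * Q (i + 1) - Q (i + 2) := fun i hi => by
    simpa using hC (i + 1) (by omega) hi
  have hd : 0 < d := by omega
  set U := hjDual C with hU
  have hUmono := hjDual_mono n C hC2
  have hUcong : ∀ i, i ≤ n → d ∣ q * U i - Q i ∧ d ∣ q * U (i + 1) - Q (i + 1) := fun i hi => by
    simpa [hQ0, hQ1] using hjDual_cong n Q C hrec i hi
  have hUdet : ∀ i, i ≤ n → Q i * U (i + 1) - Q (i + 1) * U i = d := fun i hi => by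
    simpa [hQ0] using hjDual_det n Q C hrec i hi
  have hQU : ∀ i, 1 ≤ i → i ≤ n → Qbar i = U i := fun i h1 h2 =>
    eq_hjDual n Q C hQn hQtop hrec hC2 i h1 h2 _ (hQbarPos i h1 h2)
      (by rw [hQ0, hQ1]; exact hQbarCong i h1 h2) (by rw [hQ0, hQ1]; exact hQbarMin i h1 h2)
  have hXU : ∀ i j, 1 ≤ j → j < i → i ≤ n → Q j * U i - Q i * U j = d * QbarX j (i - j) := by
    intro i j h1 h2 h3
    -- the tail of the data starting at `j` is Hirzebruch–Jung data for `X_j`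
    have hX : QbarX j (i - j) = hjDual (fun m => C (j + m)) (i - j) :=
      eq_hjDual (n - j) (fun m => Q (j + m)) (fun m => C (j + m))
        (by simpa [show j + (n - j) = n by omega] using hQn)
        (by simpa [show j + (n - j + 1) = n + 1 by omega] using hQtop)
        (fun m hm => hrec (j + m) (by omega))
        (fun m h1 h2 => hC2 (j + m) (by omega) (by omega)) (i - j) (by omega) (by omega) _
        (hXpos j (i - j) (by omega) (by omega) (by omega))
        (hXcong j (i - j) (by omega) (by omega) (by omega))
        (hXmin j (i - j) (by omega) (by omega) (by omega))
    -- both sides satisfy the same three-term recursion in `i`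
    have hind : ∀ m, j + m ≤ n →
        Q j * U (j + m) - Q (j + m) * U j = d * hjDual (fun m => C (j + m)) m ∧
        Q j * U (j + m + 1) - Q (j + m + 1) * U j = d * hjDual (fun m => C (j + m)) (m + 1) := by
      intro m
      induction m with
      | zero =>
        intro hm
        refine ⟨by simp [hjDual], ?_⟩
        simpa [hjDual] using hUdet j hm
      | succ m ih =>
        intro hm
        obtain ⟨e1, e2⟩ := ih (by omega)
        refine ⟨e2, ?_⟩
        have r := hrec (j + m) (by omega)
        have r' : U (j + m + 2) = C (j + m + 1) * U (j + m + 1) - U (j + m) := rfl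
        show Q j * U (j + m + 2) - Q (j + m + 2) * U j =
          d * (C (j + m + 1) * hjDual (fun m => C (j + m)) (m + 1)
            - hjDual (fun m => C (j + m)) m)
        rw [r']
        linear_combination C (j + m + 1) * e2 - e1 - U j * r
    rw [hX, ← (hind (i - j) (by omega)).1, show j + (i - j) = i by omega]
  set g := hjGreedy Q k with hg
  set R := hjRem Q k with hRdef
  have hR0 : R 0 = k := by
    show k % Q 0 = k
    rw [hQ0]; exact Int.emod_eq_of_lt hk0.le hkd
  have hR : ∀ i, i + 1 ≤ n → R i = g (i + 1) * Q (i + 1) + R (i + 1) := fun i _ => by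
    show R i = R i / Q (i + 1) * Q (i + 1) + R i % Q (i + 1)
    rw [mul_comm]; exact (Int.mul_ediv_add_emod _ _).symm
  have hRb : ∀ i, i ≤ n → 0 ≤ R i ∧ R i < Q i := fun i hi => by
    rcases i with _ | i
    · rw [hR0, hQ0]; exact ⟨hk0.le, hkd⟩
    · exact ⟨Int.emod_nonneg _ (hQpos _ hi).ne', Int.emod_lt_of_pos _ (hQpos _ hi)⟩
  have hgnn : ∀ i, i + 1 ≤ n → 0 ≤ g (i + 1) := fun i hi =>
    Int.ediv_nonneg (hRb i (by omega)).1 (hQpos _ hi).le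
  have hRn : R n = 0 := by
    have := hRb n le_rfl
    omega
  set Y : ℕ → ℤ := fun m => ∑ i ∈ Finset.range m, g (i + 1) * U (i + 1) with hYdef
  have hY0 : Y 0 = 0 := by simp [hYdef]
  have hY : ∀ i, i + 1 ≤ n → Y (i + 1) = Y i + g (i + 1) * U (i + 1) := fun i _ =>
    Finset.sum_range_succ _ _
  have hYnn : ∀ i, i ≤ n → 0 ≤ Y i := fun i hi =>
    Finset.sum_nonneg fun j hj => by
      have hj := Finset.mem_range.1 hj
      exact mul_nonneg (hgnn j (by omega)) (hUmono (j + 1) (by omega)).1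
  have hbd := hj_dual_bounds n Q C U g R Y hQpos hQnn hrec rfl rfl (fun _ _ => rfl) hUmono hR hRb
    hY0 hY
  obtain ⟨a1, -, a3⟩ := hj_area_identity n d k Q U g R Y QbarX hR0 hR hY0 hY hXU n le_rfl
  have hkbar : ∑ i ∈ Finset.Icc 1 n, g i * Qbar i = Y n := by
    rw [a1]
    exact Finset.sum_congr rfl fun i hi => by
      rw [hQU i (Finset.mem_Icc.1 hi).1 (Finset.mem_Icc.1 hi).2]
  have hVcong : ∀ i, i ≤ n → d ∣ R i + q * Y i - k := by
    intro i
    induction i with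
    | zero => simp [hR0, hY0]
    | succ m ih =>
      intro hm
      obtain ⟨a, ha⟩ := ih (by omega)
      obtain ⟨b, hb⟩ := (hUcong (m + 1) hm).1
      refine ⟨a + g (m + 1) * b, ?_⟩
      rw [hY m hm]
      linear_combination ha + g (m + 1) * hb - hR m hm
  set L : Set (ℝ × ℝ) := {p : ℝ × ℝ | ∃ r s : ℤ, 0 ≤ r ∧ 0 ≤ s ∧ d ∣ r + q * s - k ∧
            p = ((r : ℝ), (s : ℝ))} with hL
  have harea := volume_below_chain n (convexHull ℝ L) (convex_convexHull ℝ L)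
    (hull_add_nonneg L d (by exact_mod_cast hd)
      (by
        rintro _ ⟨r, s, hr, hs, hc, rfl⟩
        refine ⟨r + d, s, by omega, hs, ?_, by simp⟩
        have := dvd_add hc (dvd_refl d)
        ring_nf at this ⊢; exact this)
      (by
        rintro _ ⟨r, s, hr, hs, hc, rfl⟩
        refine ⟨r, s + d, hr, by omega, ?_, by simp⟩
        have := dvd_add hc (dvd_mul_left d q)
        ring_nf at this ⊢; exact this))
    (fun i => (R i : ℝ)) (fun i => (Y i : ℝ)) (fun i => (U i : ℝ)) (fun i => (Q i : ℝ))
    (fun i hi => subset_convexHull ℝ L ⟨R i, Y i, (hRb i hi).1, hYnn i hi, hVcong i hi, rfl⟩)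
    (by simp [hRn]) (by simp [hY0]) (fun i hi => by exact_mod_cast hYnn i hi)
    (fun i hi => by
      have := mul_nonneg (hgnn i hi) (hQpos _ hi).le
      have := hR i hi
      exact_mod_cast (by linarith : R (i + 1) ≤ R i))
    (fun i hi => by exact_mod_cast hQpos _ hi)
    (fun i hi => by
      have h1 := hR i hi
      have h2 := hY i hi
      have : U (i + 1) * R i + Q (i + 1) * Y i = U (i + 1) * R (i + 1) + Q (i + 1) * Y (i + 1) := by
        rw [h1, h2]; ring
      exact_mod_cast this)
    (fun i hi => by
      have hconv : Convex ℝ {p : ℝ × ℝ | (U (i + 1) : ℝ) * R (i + 1) + Q (i + 1) * Y (i + 1) ≤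
          U (i + 1) * p.1 + Q (i + 1) * p.2} :=
        convex_halfSpace_ge (f := fun p : ℝ × ℝ => (U (i + 1) : ℝ) * p.1 + Q (i + 1) * p.2)
          ⟨fun a b => by simp; ring, fun c a => by simp; ring⟩ _
      refine fun p hp => convexHull_min ?_ hconv hp
      rintro _ ⟨r, s, hr, hs, hc, rfl⟩
      have hb := hbd (i + 1) hi
      have hm := hUmono (i + 1) hi
      have := hj_support d q (Q (i + 1)) (Q (i + 2)) (U (i + 1)) (U (i + 2)) (R (i + 1))
        (Y (i + 1)) r s hd (hUdet (i + 1) hi) (hQnn _ (by omega)) (hQdec (i + 1) hi) hm.1 hm.2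
        (hUcong (i + 1) hi).1 (hUcong (i + 1) hi).2 (hRb _ hi).2 hb.1 hb.2 hr hs
        (by
          have := dvd_sub hc (hVcong (i + 1) hi)
          ring_nf at this ⊢; exact this)
      simp only [Set.mem_ofPred_eq]
      exact_mod_cast this)
  rw [harea, hkbar]
  rw [hRn, zero_mul, sub_zero] at a3
  rw [← a3]
  push_cast
  refine Finset.sum_congr rfl fun i hi => ?_
  have h := hR i (by have := Finset.mem_range.1 hi; omega)
  rw [h]
  push_cast
  ring
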